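/- Let F be the Minkowskian product of Finsler metrics F₁ and F₂ with respect to a product function f. Then at every point (x,y) = ((x₁,x₂),(y₁,y₂)) with y₁ ≠ 0 and y₂ ≠ 0, the Landsberg curvature L_{βγη} = −¼·y^ν·G_{να}·B^α_{βγη} of F satisfies: L_{ijl}(x,y) = f_K·L¹_{ijl}(x₁,y₁) and L_{i'j'l'}(x,y) = f_H·L²_{i'j'l'}(x₂,y₂), where f_K and f_H are evaluated at (K(x₁,y₁), H(x₂,y₂)), and every component with mixed block indices vanishes: L_{i'jl} = L_{ij'l} = L_{ijl'} = L_{i'j'l} = L_{i'jl'} = L_{ij'l'} = 0. Here L¹ and L² are the Landsberg curvatures of F₁ and F₂. -/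

import Mathlib

open Matrix

/-- Partial derivative in the fiber variable `y` in the direction of the `α`-th
coordinate, for a function `g (x, y)` of a base point and a fiber vector. -/
noncomputable def pdy {ι : Type*} [Fintype ι] [DecidableEq ι]
    (g : (ι → ℝ) → (ι → ℝ) → ℝ) (α : ι) : (ι → ℝ) → (ι → ℝ) → ℝ :=
  fun x y => fderiv ℝ (g x) y (Pi.single α 1)

/-- Partial derivative in the base variable `x` in the direction of the `γ`-th
coordinate, for a function `g (x, y)` of a base point and a fiber vector. -/
noncomputable def pdx {ι : Type*} [Fintype ι] [DecidableEq ι]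
    (g : (ι → ℝ) → (ι → ℝ) → ℝ) (γ : ι) : (ι → ℝ) → (ι → ℝ) → ℝ :=
  fun x y => fderiv ℝ (fun x' => g x' y) x (Pi.single γ 1)

/-- The fundamental tensor `(G_{αβ}) = (∂²(F²)/∂y^α∂y^β)` of a Finsler metric `F`. -/
noncomputable def fundTensor {ι : Type*} [Fintype ι] [DecidableEq ι]
    (F : (ι → ℝ) → (ι → ℝ) → ℝ) (x y : ι → ℝ) : Matrix ι ι ℝ :=
  fun α β => pdy (pdy (fun x' y' => (F x' y') ^ 2) β) α x y

/-- `F` is a Finsler metric on the open set `U`: `G = F²` is smooth on the slit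
domain, `F` is positive for `y ≠ 0`, absolutely 1-homogeneous in `y`, and its
fundamental tensor is positive definite for `y ≠ 0`. -/
structure IsFinslerMetric {ι : Type*} [Fintype ι] [DecidableEq ι]
    (U : Set (ι → ℝ)) (F : (ι → ℝ) → (ι → ℝ) → ℝ) : Prop where
  isOpen : IsOpen U
  smooth : ContDiffOn ℝ (⊤ : ℕ∞) (fun p : (ι → ℝ) × (ι → ℝ) => (F p.1 p.2) ^ 2)
    (U ×ˢ {y | y ≠ 0})
  pos : ∀ x ∈ U, ∀ y : ι → ℝ, y ≠ 0 → 0 < F x y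
  homog : ∀ x ∈ U, ∀ (y : ι → ℝ) (c : ℝ), F x (c • y) = |c| * F x y
  posDef : ∀ x ∈ U, ∀ y : ι → ℝ, y ≠ 0 → (fundTensor F x y).PosDef

/-- The geodesic spray coefficients
`𝔾^α = ½ G^{αβ}(∂²G/∂y^β∂x^γ · y^γ − ∂G/∂x^β)` of a Finsler metric `F`. -/
noncomputable def spray {ι : Type*} [Fintype ι] [DecidableEq ι]
    (F : (ι → ℝ) → (ι → ℝ) → ℝ) (α : ι) : (ι → ℝ) → (ι → ℝ) → ℝ :=
  fun x y => (1 / 2) * ∑ β, (fundTensor F x y)⁻¹ α β *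
    ((∑ γ, pdx (pdy (fun x' y' => (F x' y') ^ 2) β) γ x y * y γ) -
      pdx (fun x' y' => (F x' y') ^ 2) β x y)

/-- The Cartan nonlinear connection coefficients `Γ^α_β = ∂𝔾^α/∂y^β`. -/
noncomputable def nonlinConn {ι : Type*} [Fintype ι] [DecidableEq ι]
    (F : (ι → ℝ) → (ι → ℝ) → ℝ) (α β : ι) : (ι → ℝ) → (ι → ℝ) → ℝ :=
  pdy (spray F α) β

/-- The Berwald connection coefficients `Γ̌^α_{β;γ} = ∂Γ^α_γ/∂y^β = ∂²𝔾^α/∂y^β∂y^γ`. -/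
noncomputable def berwaldConn {ι : Type*} [Fintype ι] [DecidableEq ι]
    (F : (ι → ℝ) → (ι → ℝ) → ℝ) (α β γ : ι) : (ι → ℝ) → (ι → ℝ) → ℝ :=
  pdy (nonlinConn F α γ) β

/-- The Berwald curvature `B^α_{βγη} = ∂³𝔾^α/∂y^β∂y^γ∂y^η`. -/
noncomputable def berwaldCurv {ι : Type*} [Fintype ι] [DecidableEq ι]
    (F : (ι → ℝ) → (ι → ℝ) → ℝ) (α β γ η : ι) : (ι → ℝ) → (ι → ℝ) → ℝ :=
  pdy (pdy (pdy (spray F α) η) γ) β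

/-- The mean Berwald curvature `E_{βγ} = ½ B^α_{βγα}` (sum over `α`). -/
noncomputable def meanBerwaldCurv {ι : Type*} [Fintype ι] [DecidableEq ι]
    (F : (ι → ℝ) → (ι → ℝ) → ℝ) (β γ : ι) : (ι → ℝ) → (ι → ℝ) → ℝ :=
  fun x y => (1 / 2) * ∑ α, berwaldCurv F α β γ α x y

/-- The Landsberg curvature `L_{βγη} = −¼ y^ν G_{να} B^α_{βγη}` (sums over `ν, α`). -/
noncomputable def landsbergCurv {ι : Type*} [Fintype ι] [DecidableEq ι]
    (F : (ι → ℝ) → (ι → ℝ) → ℝ) (β γ η : ι) : (ι → ℝ) → (ι → ℝ) → ℝ :=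
  fun x y => -(1 / 4) * ∑ ν, ∑ α, y ν * fundTensor F x y ν α * berwaldCurv F α β γ η x y

/-- The mean Landsberg curvature `J_α = 2 G^{βγ} L_{αβγ}` (sums over `β, γ`). -/
noncomputable def meanLandsbergCurv {ι : Type*} [Fintype ι] [DecidableEq ι]
    (F : (ι → ℝ) → (ι → ℝ) → ℝ) (α : ι) : (ι → ℝ) → (ι → ℝ) → ℝ :=
  fun x y => 2 * ∑ β, ∑ γ, (fundTensor F x y)⁻¹ β γ * landsbergCurv F α β γ x y

/-- Partial derivative of `f : ℝ → ℝ → ℝ` with respect to the first variable. -/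
noncomputable def pderivS (f : ℝ → ℝ → ℝ) (s t : ℝ) : ℝ := deriv (fun u => f u t) s

/-- Partial derivative of `f : ℝ → ℝ → ℝ` with respect to the second variable. -/
noncomputable def pderivT (f : ℝ → ℝ → ℝ) (s t : ℝ) : ℝ := deriv (fun v => f s v) t

/-- `f_st = ∂²f/∂s∂t`. -/
noncomputable def pderivST (f : ℝ → ℝ → ℝ) (s t : ℝ) : ℝ :=
  deriv (fun u => pderivT f u t) s

/-- The data of a Minkowskian product: `F₁, F₂` are Finsler metrics on `U₁, U₂`,
`f` is an admissible product function, and `F = √(f(F₁², F₂²))` is the Minkowskian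
product metric, itself assumed to be a Finsler metric on `U₁ × U₂`. -/
structure IsMinkowskianProduct {m n : ℕ}
    (U₁ : Set (Fin m → ℝ)) (U₂ : Set (Fin n → ℝ))
    (F₁ : (Fin m → ℝ) → (Fin m → ℝ) → ℝ) (F₂ : (Fin n → ℝ) → (Fin n → ℝ) → ℝ)
    (f : ℝ → ℝ → ℝ)
    (F : (Fin m ⊕ Fin n → ℝ) → (Fin m ⊕ Fin n → ℝ) → ℝ) : Prop where
  finsler₁ : IsFinslerMetric U₁ F₁
  finsler₂ : IsFinslerMetric U₂ F₂
  f_cont : ContinuousOn (fun p : ℝ × ℝ => f p.1 p.2) (Set.Ici 0 ×ˢ Set.Ici 0)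
  f_nonneg : ∀ s ∈ Set.Ici (0 : ℝ), ∀ t ∈ Set.Ici (0 : ℝ), 0 ≤ f s t
  f_zero_iff : ∀ s ∈ Set.Ici (0 : ℝ), ∀ t ∈ Set.Ici (0 : ℝ),
    (f s t = 0 ↔ s = 0 ∧ t = 0)
  f_homog : ∀ c ∈ Set.Ici (0 : ℝ), ∀ s ∈ Set.Ici (0 : ℝ), ∀ t ∈ Set.Ici (0 : ℝ),
    f (c * s) (c * t) = c * f s t
  f_smooth : ContDiffOn ℝ (⊤ : ℕ∞) (fun p : ℝ × ℝ => f p.1 p.2)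
    (Set.Ioi 0 ×ˢ Set.Ioi 0)
  fs_ne : ∀ s > (0 : ℝ), ∀ t > (0 : ℝ), pderivS f s t ≠ 0
  ft_ne : ∀ s > (0 : ℝ), ∀ t > (0 : ℝ), pderivT f s t ≠ 0
  delta_ne : ∀ s > (0 : ℝ), ∀ t > (0 : ℝ),
    pderivS f s t * pderivT f s t - 2 * f s t * pderivST f s t ≠ 0
  F_def : ∀ (x y : Fin m ⊕ Fin n → ℝ),
    F x y = Real.sqrt (f ((F₁ (x ∘ Sum.inl) (y ∘ Sum.inl)) ^ 2)
      ((F₂ (x ∘ Sum.inr) (y ∘ Sum.inr)) ^ 2))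
  finsler : IsFinslerMetric
    {x : Fin m ⊕ Fin n → ℝ | (x ∘ Sum.inl) ∈ U₁ ∧ (x ∘ Sum.inr) ∈ U₂} F

/-!
The spray of a Finsler metric `F` is determined by the Euler–Lagrange equations of its energy
`F²`: along the flow of the semispray `S = (y, -2𝔾)` on the tangent bundle they read
`S (∂F²/∂y^β) = ∂F²/∂x^β`. As `F²` is homogeneous of degree `2 ≠ 1`, they imply the conservation
law `S (F²) = 0`.

For a product metric `F² = f (K, H)`, let `S` be the direct sum of the two semisprays of the
factors. Then `S K = S H = 0`, so `f_K` and `f_H` are constant along `S`, and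
`S (f_K K_{y^β} + f_H H_{y^β}) = f_K K_{x^β} + f_H H_{x^β}`: the spray of `F` is the direct sum
of the sprays of `F₁` and `F₂`. The Berwald curvature is therefore block diagonal. Since Euler's
theorem turns `y^ν G_{να}` into `∂F²/∂y^α = f_K K_{y^α} + f_H H_{y^α}`, contracting gives
`L = f_K L¹ ⊕ f_H L²`.
-/

open Function Set Filter Topology

section Calculus

variable {E E' : Type*} [NormedAddCommGroup E] [NormedSpace ℝ E]
  [NormedAddCommGroup E'] [NormedSpace ℝ E']

lemma fderiv_apply_self_of_homogeneous {u : E → E'} {y : E} {k : ℕ}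
    (hu : DifferentiableAt ℝ u y) (hhom : ∀ c : ℝ, 0 < c → u (c • y) = c ^ k • u y) :
    fderiv ℝ u y y = (k : ℝ) • u y := by
  have hsmul : HasDerivAt (fun c : ℝ => c • y) y 1 := by
    simpa using (hasDerivAt_id (1 : ℝ)).smul_const y
  have hleft : HasDerivAt (fun c : ℝ => u (c • y)) (fderiv ℝ u y y) 1 := by
    refine HasFDerivAt.comp_hasDerivAt (f := fun c : ℝ => c • y) 1 ?_ hsmul
    simpa using hu.hasFDerivAt
  have hright : HasDerivAt (fun c : ℝ => c ^ k • u y) ((k : ℝ) • u y) 1 := by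
    simpa using (hasDerivAt_pow k (1 : ℝ)).smul_const (u y)
  refine hleft.unique (hright.congr_of_eventuallyEq ?_)
  filter_upwards [lt_mem_nhds zero_lt_one] with c hc using hhom c hc

lemma fderiv_smul_of_homogeneous {u : E → E'} {c : ℝ} {k : ℕ} (hc : c ≠ 0)
    (hhom : ∀ z, u (c • z) = c ^ (k + 1) • u z) (y : E) :
    fderiv ℝ u (c • y) = c ^ k • fderiv ℝ u y := by
  have h : c • fderiv ℝ u (c • y) = c ^ (k + 1) • fderiv ℝ u y := by
    rw [← fderiv_comp_smul, funext hhom]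
    exact congrFun (fderiv_const_smul_field (c ^ (k + 1))) y
  rw [pow_succ', mul_smul] at h
  exact smul_right_injective _ hc h

/-- The right inverse spares a differentiability hypothesis on `u`. -/
lemma fderiv_comp_of_hasRightInverse {D : Type*} [NormedAddCommGroup D] [NormedSpace ℝ D]
    {L : E →L[ℝ] D} (hL : L.HasRightInverse) (u : D → E') (z : E) :
    fderiv ℝ (fun z => u (L z)) z = (fderiv ℝ u (L z)).comp L := by
  by_cases hu : DifferentiableAt ℝ u (L z)
  · exact (hu.hasFDerivAt.comp z L.hasFDerivAt).fderiv
  · have huL : ¬ DifferentiableAt ℝ (fun z => u (L z)) z := by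
      refine fun h => hu ?_
      obtain ⟨R, hR⟩ := hL
      let σ : D → E := fun w => z + R (w - L z)
      have hLR (w : D) : L (R w) = w := hR w
      have hσ : (fun z => u (L z)) ∘ σ = u := funext fun w => by simp [σ, hLR]
      have hσz : σ (L z) = z := by simp [σ]
      rw [← hσ]
      exact DifferentiableAt.comp (L z) (by rwa [hσz]) (by fun_prop)
    rw [fderiv_zero_of_not_differentiableAt hu, fderiv_zero_of_not_differentiableAt huL,
      ContinuousLinearMap.zero_comp]

lemma fderiv_comp_prodMk {φ : ℝ × ℝ → ℝ} {k h : E → ℝ} {z : E}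
    (hφ : DifferentiableAt ℝ φ (k z, h z)) (hk : DifferentiableAt ℝ k z)
    (hh : DifferentiableAt ℝ h z) :
    fderiv ℝ (fun z => φ (k z, h z)) z =
      fderiv ℝ φ (k z, h z) (1, 0) • fderiv ℝ k z +
        fderiv ℝ φ (k z, h z) (0, 1) • fderiv ℝ h z := by
  have hcomp := hφ.hasFDerivAt.comp (f := fun z => (k z, h z)) z
    (hk.hasFDerivAt.prodMk hh.hasFDerivAt)
  refine hcomp.fderiv.trans (ContinuousLinearMap.ext fun v => ?_)
  have hv : (fderiv ℝ k z v, fderiv ℝ h z v) =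
      fderiv ℝ k z v • ((1, 0) : ℝ × ℝ) + fderiv ℝ h z v • ((0, 1) : ℝ × ℝ) := by simp
  simp only [ContinuousLinearMap.comp_apply, ContinuousLinearMap.prod_apply, hv, map_add,
    map_smul, _root_.add_apply, _root_.smul_apply, smul_eq_mul, mul_comm]

lemma fderiv_uncurry_inl {D : Type*} [NormedAddCommGroup D] [NormedSpace ℝ D] {g : D → E → E'}
    {x : D} {y : E} (hg : DifferentiableAt ℝ (uncurry g) (x, y)) (v : D) :
    fderiv ℝ (uncurry g) (x, y) (v, 0) = fderiv ℝ (fun x' => g x' y) x v := by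
  have h : HasFDerivAt (fun x' => g x' y) _ x :=
    hg.hasFDerivAt.comp (f := fun x' => (x', y)) x (hasFDerivAt_prodMk_left x y)
  simp [h.fderiv]

lemma fderiv_uncurry_inr {D : Type*} [NormedAddCommGroup D] [NormedSpace ℝ D] {g : D → E → E'}
    {x : D} {y : E} (hg : DifferentiableAt ℝ (uncurry g) (x, y)) (w : E) :
    fderiv ℝ (uncurry g) (x, y) (0, w) = fderiv ℝ (g x) y w := by
  have h : HasFDerivAt (g x) _ y :=
    hg.hasFDerivAt.comp (f := fun y' => (x, y')) y (hasFDerivAt_prodMk_right x y)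
  simp [h.fderiv]

lemma pderivS_eq_fderiv {f : ℝ → ℝ → ℝ} {s t : ℝ} (hf : DifferentiableAt ℝ (uncurry f) (s, t)) :
    pderivS f s t = fderiv ℝ (uncurry f) (s, t) (1, 0) :=
  (hf.hasFDerivAt.comp_hasDerivAt (f := fun u => (u, t)) s
    ((hasDerivAt_id s).prodMk (hasDerivAt_const s t))).deriv

lemma pderivT_eq_fderiv {f : ℝ → ℝ → ℝ} {s t : ℝ} (hf : DifferentiableAt ℝ (uncurry f) (s, t)) :
    pderivT f s t = fderiv ℝ (uncurry f) (s, t) (0, 1) :=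
  (hf.hasFDerivAt.comp_hasDerivAt (f := fun u => (s, u)) t
    ((hasDerivAt_const t s).prodMk (hasDerivAt_id t))).deriv

end Calculus

section PartialDerivatives

variable {ι : Type*} [Fintype ι] [DecidableEq ι] {g g' : (ι → ℝ) → (ι → ℝ) → ℝ} {x y : ι → ℝ}

lemma sum_mul_apply_single (L : (ι → ℝ) →L[ℝ] ℝ) (v : ι → ℝ) :
    ∑ i, v i * L (Pi.single i 1) = L v := by
  conv_rhs => rw [← (Pi.basisFun ℝ ι).sum_repr v]
  simp

lemma sum_mul_pdy (g : (ι → ℝ) → (ι → ℝ) → ℝ) (x y v : ι → ℝ) :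
    ∑ α, v α * pdy g α x y = fderiv ℝ (g x) y v :=
  sum_mul_apply_single _ v

lemma sum_mul_pdx (g : (ι → ℝ) → (ι → ℝ) → ℝ) (x y v : ι → ℝ) :
    ∑ γ, v γ * pdx g γ x y = fderiv ℝ (fun x' => g x' y) x v :=
  sum_mul_apply_single _ v

lemma fderiv_uncurry_apply (hg : DifferentiableAt ℝ (uncurry g) (x, y)) (v w : ι → ℝ) :
    fderiv ℝ (uncurry g) (x, y) (v, w) = ∑ γ, v γ * pdx g γ x y + ∑ α, w α * pdy g α x y := by
  rw [sum_mul_pdx, sum_mul_pdy, ← fderiv_uncurry_inl hg, ← fderiv_uncurry_inr hg, ← map_add]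
  simp

lemma sum_mul_pdy_of_homogeneous {k : ℕ} (hg : DifferentiableAt ℝ (uncurry g) (x, y))
    (hhom : ∀ c : ℝ, 0 < c → g x (c • y) = c ^ k • g x y) :
    ∑ α, y α * pdy g α x y = k * g x y := by
  have hgx : DifferentiableAt ℝ (g x) y :=
    hg.comp (f := fun y' => (x, y')) y (hasFDerivAt_prodMk_right x y).differentiableAt
  rw [sum_mul_pdy, fderiv_apply_self_of_homogeneous hgx hhom, smul_eq_mul]

lemma pdy_zero (α : ι) : pdy (fun _ _ => 0) α = fun _ _ => 0 := by
  ext x y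
  simp [pdy]

lemma pdy_eventuallyEq (h : g x =ᶠ[𝓝 y] g' x) (α : ι) : pdy g α x =ᶠ[𝓝 y] pdy g' α x :=
  h.fderiv.fun_comp fun T : (ι → ℝ) →L[ℝ] ℝ => T (Pi.single α 1)

lemma contDiffAt_uncurry_pdy {n : ℕ} (hg : ContDiffAt ℝ (n + 1) (uncurry g) (x, y)) (α : ι) :
    ContDiffAt ℝ n (uncurry (pdy g α)) (x, y) := by
  refine (hg.fderiv_right_succ.clm_apply
    (contDiffAt_const (c := ((0 : ι → ℝ), Pi.single α (1 : ℝ))))).congr_of_eventuallyEq ?_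
  filter_upwards [hg.eventually (by norm_cast; simp)] with p hp
  exact (fderiv_uncurry_inr (hp.differentiableAt (by norm_cast)) _).symm

variable {K H G : (ι → ℝ) → (ι → ℝ) → ℝ} {φ : ℝ × ℝ → ℝ}

lemma pdy_comp_prodMk (hφ : DifferentiableAt ℝ φ (K x y, H x y))
    (hK : DifferentiableAt ℝ (uncurry K) (x, y)) (hH : DifferentiableAt ℝ (uncurry H) (x, y))
    (hG : uncurry G =ᶠ[𝓝 (x, y)] fun p => φ (uncurry K p, uncurry H p)) (α : ι) :
    pdy G α x y = fderiv ℝ φ (K x y, H x y) (1, 0) * pdy K α x y +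
      fderiv ℝ φ (K x y, H x y) (0, 1) * pdy H α x y := by
  have hGd : DifferentiableAt ℝ (uncurry G) (x, y) :=
    (hφ.comp (f := fun p => (uncurry K p, uncurry H p)) (x, y)
      (hK.prodMk hH)).congr_of_eventuallyEq hG
  simp only [pdy, ← fderiv_uncurry_inr hGd, ← fderiv_uncurry_inr hK, ← fderiv_uncurry_inr hH,
    hG.fderiv_eq, fderiv_comp_prodMk (k := uncurry K) (h := uncurry H) hφ hK hH]
  rfl

lemma uncurry_pdy_comp_prodMk_eventuallyEq (hφ : ContDiffAt ℝ 2 φ (K x y, H x y))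
    (hK : ContDiffAt ℝ 2 (uncurry K) (x, y)) (hH : ContDiffAt ℝ 2 (uncurry H) (x, y))
    (hG : uncurry G =ᶠ[𝓝 (x, y)] fun p => φ (uncurry K p, uncurry H p)) (α : ι) :
    uncurry (pdy G α) =ᶠ[𝓝 (x, y)] fun p =>
      fderiv ℝ φ (uncurry K p, uncurry H p) (1, 0) * uncurry (pdy K α) p +
        fderiv ℝ φ (uncurry K p, uncurry H p) (0, 1) * uncurry (pdy H α) p := by
  filter_upwards [hG.eventuallyEq_nhds, hK.eventually (by simp), hH.eventually (by simp),
    (hK.continuousAt.prodMk hH.continuousAt).eventually (hφ.eventually (by simp))]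
    with p hGp hKp hHp hφp
  exact pdy_comp_prodMk (hφp.differentiableAt (by simp)) (hKp.differentiableAt (by simp))
    (hHp.differentiableAt (by simp)) hGp α

lemma pdx_comp_prodMk (hφ : DifferentiableAt ℝ φ (K x y, H x y))
    (hK : DifferentiableAt ℝ (uncurry K) (x, y)) (hH : DifferentiableAt ℝ (uncurry H) (x, y))
    (hG : uncurry G =ᶠ[𝓝 (x, y)] fun p => φ (uncurry K p, uncurry H p)) (γ : ι) :
    pdx G γ x y = fderiv ℝ φ (K x y, H x y) (1, 0) * pdx K γ x y +
      fderiv ℝ φ (K x y, H x y) (0, 1) * pdx H γ x y := by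
  have hGd : DifferentiableAt ℝ (uncurry G) (x, y) :=
    (hφ.comp (f := fun p => (uncurry K p, uncurry H p)) (x, y)
      (hK.prodMk hH)).congr_of_eventuallyEq hG
  simp only [pdx, ← fderiv_uncurry_inl hGd, ← fderiv_uncurry_inl hK, ← fderiv_uncurry_inl hH,
    hG.fderiv_eq, fderiv_comp_prodMk (k := uncurry K) (h := uncurry H) hφ hK hH]
  rfl

end PartialDerivatives

section EulerLagrange

variable {ι : Type*} [Fintype ι]

/-- The derivative at `(x, y)` of a function `g` on the tangent bundle along a semispray
`y^γ ∂/∂x^γ - 2 Q^α ∂/∂y^α`. Only the value `Q` of the semispray coefficients at `(x, y)` matters,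
so `Q` is a vector and not a function. -/
noncomputable def semisprayDeriv (Q : ι → ℝ) (g : (ι → ℝ) → (ι → ℝ) → ℝ) (x y : ι → ℝ) : ℝ :=
  fderiv ℝ (uncurry g) (x, y) (y, -((2 : ℝ) • Q))

variable [DecidableEq ι]

lemma semisprayDeriv_eq_sum {g : (ι → ℝ) → (ι → ℝ) → ℝ} {x y : ι → ℝ}
    (hg : DifferentiableAt ℝ (uncurry g) (x, y)) (Q : ι → ℝ) :
    semisprayDeriv Q g x y = ∑ γ, y γ * pdx g γ x y - 2 * ∑ α, Q α * pdy g α x y := by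
  simp [semisprayDeriv, fderiv_uncurry_apply hg, Finset.mul_sum, mul_assoc, sub_eq_add_neg]

/-- The Euler–Lagrange equations `d/dt (∂G/∂y^β) = ∂G/∂x^β` of the Lagrangian `G` at `(x, y)`, for
a curve with velocity `y` and acceleration `-2 Q`. -/
def SolvesEulerLagrange (G : (ι → ℝ) → (ι → ℝ) → ℝ) (Q x y : ι → ℝ) : Prop :=
  ∀ β, semisprayDeriv Q (pdy G β) x y = pdx G β x y

variable {x y Q : ι → ℝ}

/-- Conservation of the Hamiltonian energy `y^β ∂G/∂y^β - G`. -/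
lemma SolvesEulerLagrange.semisprayDeriv_hamiltonian {G : (ι → ℝ) → (ι → ℝ) → ℝ}
    (hQ : SolvesEulerLagrange G Q x y) (hG : ContDiffAt ℝ 2 (uncurry G) (x, y)) :
    semisprayDeriv Q (fun x y => ∑ β, y β * pdy G β x y - G x y) x y = 0 := by
  have hGd : DifferentiableAt ℝ (uncurry G) (x, y) := hG.differentiableAt (by simp)
  have hGy (β : ι) : DifferentiableAt ℝ (uncurry (pdy G β)) (x, y) :=
    (contDiffAt_uncurry_pdy (n := 1) hG β).differentiableAt (by simp)
  have hcoord (β : ι) : HasFDerivAt (fun p : (ι → ℝ) × (ι → ℝ) => p.2 β)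
      ((ContinuousLinearMap.proj β).comp (ContinuousLinearMap.snd ℝ (ι → ℝ) (ι → ℝ))) (x, y) :=
    ((ContinuousLinearMap.proj β).comp
      (ContinuousLinearMap.snd ℝ (ι → ℝ) (ι → ℝ)) : (ι → ℝ) × (ι → ℝ) →L[ℝ] ℝ).hasFDerivAt
  have hE := (HasFDerivAt.fun_sum (u := Finset.univ) fun β _ =>
    (hcoord β).mul (hGy β).hasFDerivAt).sub hGd.hasFDerivAt
  have hSG := semisprayDeriv_eq_sum hGd Q
  simp only [SolvesEulerLagrange, semisprayDeriv] at hQ hSG ⊢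
  refine (congrArg (· (y, -((2 : ℝ) • Q))) hE.fderiv).trans ?_
  simp [hQ, hSG, Finset.sum_add_distrib, Finset.mul_sum, mul_comm, mul_left_comm, mul_assoc]

/-- Since `S K = S H = 0`, the coefficients `∂φ/∂K` and `∂φ/∂H` of the momenta are constant along
the semispray. -/
theorem SolvesEulerLagrange.comp_prodMk {K H G : (ι → ℝ) → (ι → ℝ) → ℝ} {φ : ℝ × ℝ → ℝ}
    (hQK : SolvesEulerLagrange K Q x y) (hQH : SolvesEulerLagrange H Q x y)
    (hSK : semisprayDeriv Q K x y = 0) (hSH : semisprayDeriv Q H x y = 0)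
    (hφ : ContDiffAt ℝ 2 φ (K x y, H x y)) (hK : ContDiffAt ℝ 2 (uncurry K) (x, y))
    (hH : ContDiffAt ℝ 2 (uncurry H) (x, y))
    (hG : uncurry G =ᶠ[𝓝 (x, y)] fun p => φ (uncurry K p, uncurry H p)) :
    SolvesEulerLagrange G Q x y := by
  simp only [SolvesEulerLagrange, semisprayDeriv] at hQK hQH hSK hSH ⊢
  intro β
  let φ' (v : ℝ × ℝ) (p : ℝ × ℝ) : ℝ := fderiv ℝ φ p v
  have hφ' (v : ℝ × ℝ) : DifferentiableAt ℝ (φ' v) (K x y, H x y) :=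
    ((hφ.fderiv_right (m := 1) (by norm_num)).differentiableAt (by simp)).clm_apply
      (differentiableAt_const v)
  have hKd : DifferentiableAt ℝ (uncurry K) (x, y) := hK.differentiableAt (by simp)
  have hHd : DifferentiableAt ℝ (uncurry H) (x, y) := hH.differentiableAt (by simp)
  have hφKH (v : ℝ × ℝ) :
      DifferentiableAt ℝ (fun p => φ' v (uncurry K p, uncurry H p)) (x, y) :=
    (hφ' v).comp (f := fun p => (uncurry K p, uncurry H p)) (x, y) (hKd.prodMk hHd)
  have hSφ (v : ℝ × ℝ) :
      fderiv ℝ (fun p => φ' v (uncurry K p, uncurry H p)) (x, y) (y, -((2 : ℝ) • Q)) = 0 := by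
    rw [fderiv_comp_prodMk (k := uncurry K) (h := uncurry H) (hφ' v) hKd hHd]
    simp [hSK, hSH]
  have hKβ : DifferentiableAt ℝ (uncurry (pdy K β)) (x, y) :=
    (contDiffAt_uncurry_pdy (n := 1) hK β).differentiableAt (by simp)
  have hHβ : DifferentiableAt ℝ (uncurry (pdy H β)) (x, y) :=
    (contDiffAt_uncurry_pdy (n := 1) hH β).differentiableAt (by simp)
  have hGβ := uncurry_pdy_comp_prodMk_eventuallyEq hφ hK hH hG β
  rw [hGβ.fderiv_eq, fderiv_fun_add ((hφKH _).fun_mul hKβ) ((hφKH _).fun_mul hHβ),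
    fderiv_fun_mul (hφKH _) hKβ, fderiv_fun_mul (hφKH _) hHβ,
    pdx_comp_prodMk (hφ.differentiableAt (by simp)) hKd hHd hG]
  simp [hSφ, hQK, hQH, φ']

end EulerLagrange

section Pullback

variable {ι κ : Type*}

/-- The pullback of a function on the tangent bundle of `ℝ^κ` along the coordinate projection
`ℝ^ι → ℝ^κ` that reads off the coordinates listed by `e : κ → ι`. -/
def pull (e : κ → ι) (g : (κ → ℝ) → (κ → ℝ) → ℝ) (x y : ι → ℝ) : ℝ := g (x ∘ e) (y ∘ e)

lemma hasRightInverse_compRightL [Finite κ] {e : κ → ι} (he : Injective e) :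
    (Pi.compRightL ℝ (fun _ => ℝ) e : (ι → ℝ) →L[ℝ] (κ → ℝ)).HasRightInverse :=
  ContinuousLinearMap.HasRightInverse.of_surjective_of_finiteDimensional
    he.surjective_comp_right

lemma single_comp_apply [DecidableEq ι] [DecidableEq κ] {e : κ → ι} (he : Injective e) (i : κ) :
    (Pi.single (e i) (1 : ℝ) : ι → ℝ) ∘ e = Pi.single i 1 := by
  ext j
  simp [Pi.single_apply, he.eq_iff]

lemma single_comp_of_notMem_range [DecidableEq ι] {e : κ → ι} {α : ι} (hα : α ∉ range e) :
    (Pi.single α (1 : ℝ) : ι → ℝ) ∘ e = 0 := by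
  ext j
  exact Pi.single_eq_of_ne (fun h => hα ⟨j, h⟩) 1

variable {e : κ → ι} {x y Q : ι → ℝ}

lemma semisprayDeriv_pull [Finite ι] [Finite κ] (he : Injective e) (Q : ι → ℝ)
    (g : (κ → ℝ) → (κ → ℝ) → ℝ) (x y : ι → ℝ) :
    semisprayDeriv Q (pull e g) x y = semisprayDeriv (Q ∘ e) g (x ∘ e) (y ∘ e) := by
  cases nonempty_fintype ι
  cases nonempty_fintype κ
  exact congrArg (· (y, -((2 : ℝ) • Q)))
    (fderiv_comp_of_hasRightInverse
      ((hasRightInverse_compRightL he).prodMap (hasRightInverse_compRightL he)) (uncurry g) (x, y))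

lemma contDiffAt_uncurry_pull [Fintype ι] [Fintype κ] {n : WithTop ℕ∞}
    {g : (κ → ℝ) → (κ → ℝ) → ℝ} (hg : ContDiffAt ℝ n (uncurry g) (x ∘ e, y ∘ e)) :
    ContDiffAt ℝ n (uncurry (pull e g)) (x, y) := by
  let L : (ι → ℝ) →L[ℝ] (κ → ℝ) := Pi.compRightL ℝ (fun _ => ℝ) e
  exact hg.comp (f := L.prodMap L) (x, y) (L.prodMap L).contDiff.contDiffAt

variable [Fintype ι] [DecidableEq ι]

lemma pdy_pull [Finite κ] (he : Injective e) (g : (κ → ℝ) → (κ → ℝ) → ℝ) (α : ι) (x y : ι → ℝ) :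
    pdy (pull e g) α x y = fderiv ℝ (g (x ∘ e)) (y ∘ e) ((Pi.single α 1 : ι → ℝ) ∘ e) := by
  cases nonempty_fintype κ
  exact congrArg (· (Pi.single α 1))
    (fderiv_comp_of_hasRightInverse (hasRightInverse_compRightL he) (g (x ∘ e)) y)

lemma pdx_pull [Finite κ] (he : Injective e) (g : (κ → ℝ) → (κ → ℝ) → ℝ) (γ : ι) (x y : ι → ℝ) :
    pdx (pull e g) γ x y =
      fderiv ℝ (fun x' => g x' (y ∘ e)) (x ∘ e) ((Pi.single γ 1 : ι → ℝ) ∘ e) := by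
  cases nonempty_fintype κ
  exact congrArg (· (Pi.single γ 1))
    (fderiv_comp_of_hasRightInverse (hasRightInverse_compRightL he) (fun x' => g x' (y ∘ e)) x)

lemma pdy_pull_of_notMem_range [Finite κ] (he : Injective e) (g : (κ → ℝ) → (κ → ℝ) → ℝ) {α : ι}
    (hα : α ∉ range e) : pdy (pull e g) α = fun _ _ => 0 := by
  ext x y
  rw [pdy_pull he, single_comp_of_notMem_range hα, map_zero]

lemma pdx_pull_of_notMem_range [Finite κ] (he : Injective e) (g : (κ → ℝ) → (κ → ℝ) → ℝ) {γ : ι}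
    (hγ : γ ∉ range e) : pdx (pull e g) γ = fun _ _ => 0 := by
  ext x y
  rw [pdx_pull he, single_comp_of_notMem_range hγ, map_zero]

section FintypeSource

variable [Fintype κ] [DecidableEq κ]

lemma pdy_pull_apply (he : Injective e) (g : (κ → ℝ) → (κ → ℝ) → ℝ) (i : κ) :
    pdy (pull e g) (e i) = pull e (pdy g i) := by
  ext x y
  rw [pdy_pull he, single_comp_apply he]
  rfl

lemma pdx_pull_apply (he : Injective e) (g : (κ → ℝ) → (κ → ℝ) → ℝ) (i : κ) :
    pdx (pull e g) (e i) = pull e (pdx g i) := by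
  ext x y
  rw [pdx_pull he, single_comp_apply he]
  rfl

lemma pdy_pdy_pdy_pull_apply (he : Injective e) (g : (κ → ℝ) → (κ → ℝ) → ℝ) (i j l : κ) :
    pdy (pdy (pdy (pull e g) (e l)) (e j)) (e i) = pull e (pdy (pdy (pdy g l) j) i) := by
  simp only [pdy_pull_apply he]

lemma SolvesEulerLagrange.pull (he : Injective e) {g : (κ → ℝ) → (κ → ℝ) → ℝ}
    (h : SolvesEulerLagrange g (Q ∘ e) (x ∘ e) (y ∘ e)) :
    SolvesEulerLagrange (pull e g) Q x y := by
  intro β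
  by_cases hβ : β ∈ range e
  · obtain ⟨i, rfl⟩ := hβ
    rw [pdy_pull_apply he, pdx_pull_apply he, semisprayDeriv_pull he]
    exact h i
  · rw [pdy_pull_of_notMem_range he g hβ, pdx_pull_of_notMem_range he g hβ]
    simp [semisprayDeriv, uncurry_def]

end FintypeSource

lemma pdy_pdy_pdy_pull_of_notMem_range [Finite κ] (he : Injective e)
    (g : (κ → ℝ) → (κ → ℝ) → ℝ) {β γ η : ι} (h : β ∉ range e ∨ γ ∉ range e ∨ η ∉ range e) :
    pdy (pdy (pdy (pull e g) η) γ) β = fun _ _ => 0 := by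
  classical
  cases nonempty_fintype κ
  by_cases hη : η ∈ range e
  · obtain ⟨l, rfl⟩ := hη
    rw [pdy_pull_apply he]
    by_cases hγ : γ ∈ range e
    · obtain ⟨j, rfl⟩ := hγ
      rw [pdy_pull_apply he, pdy_pull_of_notMem_range he _ (by simpa using h)]
    · rw [pdy_pull_of_notMem_range he _ hγ, pdy_zero]
  · rw [pdy_pull_of_notMem_range he _ hη, pdy_zero, pdy_zero]

end Pullback

section FinslerMetric

variable {ι : Type*}

/-- The energy `G = F²` of a Finsler metric, whose geodesics are the extremals of `G`. -/
abbrev energy (F : (ι → ℝ) → (ι → ℝ) → ℝ) : (ι → ℝ) → (ι → ℝ) → ℝ := fun x y => F x y ^ 2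

variable [Fintype ι] [DecidableEq ι] {U : Set (ι → ℝ)} {F : (ι → ℝ) → (ι → ℝ) → ℝ}
  {x y : ι → ℝ}

lemma fundTensor_apply (F : (ι → ℝ) → (ι → ℝ) → ℝ) (x y : ι → ℝ) (α β : ι) :
    fundTensor F x y α β = pdy (pdy (energy F) β) α x y :=
  rfl

namespace IsFinslerMetric

lemma contDiffAt_energy (hF : IsFinslerMetric U F) (hx : x ∈ U) (hy : y ≠ 0) :
    ContDiffAt ℝ (⊤ : ℕ∞) (uncurry (energy F)) (x, y) :=
  hF.smooth.contDiffAt ((hF.isOpen.prod isOpen_ne).mem_nhds ⟨hx, hy⟩)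

lemma energy_smul (hF : IsFinslerMetric U F) (hx : x ∈ U) (c : ℝ) (y : ι → ℝ) :
    energy F x (c • y) = c ^ 2 • energy F x y := by
  simp [energy, hF.homog x hx, mul_pow]

lemma sum_mul_pdy_energy (hF : IsFinslerMetric U F) (hx : x ∈ U) (hy : y ≠ 0) :
    ∑ β, y β * pdy (energy F) β x y = 2 * energy F x y := by
  have hE : DifferentiableAt ℝ (uncurry (energy F)) (x, y) :=
    (hF.contDiffAt_energy hx hy).differentiableAt (by simp)
  exact_mod_cast sum_mul_pdy_of_homogeneous hE fun c _ => hF.energy_smul hx c y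

lemma contDiffAt_pdy_energy (hF : IsFinslerMetric U F) (hx : x ∈ U) (hy : y ≠ 0) (α : ι) :
    ContDiffAt ℝ 1 (uncurry (pdy (energy F) α)) (x, y) :=
  contDiffAt_uncurry_pdy (n := 1) ((hF.contDiffAt_energy hx hy).of_le (by norm_cast)) α

lemma sum_mul_fundTensor (hF : IsFinslerMetric U F) (hx : x ∈ U) (hy : y ≠ 0) (α : ι) :
    ∑ ν, y ν * fundTensor F x y ν α = pdy (energy F) α x y := by
  have hhom (c : ℝ) (hc : 0 < c) :
      pdy (energy F) α x (c • y) = c ^ 1 • pdy (energy F) α x y := by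
    simp only [pdy, fderiv_smul_of_homogeneous (k := 1) hc.ne' (hF.energy_smul hx c) y]
    rfl
  simpa [fundTensor_apply] using
    sum_mul_pdy_of_homogeneous ((hF.contDiffAt_pdy_energy hx hy α).differentiableAt (by simp)) hhom

/-- The spray is the only solution because the fundamental tensor is nondegenerate. -/
theorem solvesEulerLagrange_iff (hF : IsFinslerMetric U F) (hx : x ∈ U) (hy : y ≠ 0)
    {Q : ι → ℝ} : SolvesEulerLagrange (energy F) Q x y ↔ Q = fun α => spray F α x y := by
  let w : ι → ℝ := fun β =>
    (1 / 2) * ((∑ γ, pdx (pdy (energy F) β) γ x y * y γ) - pdx (energy F) β x y)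
  have hpos := hF.posDef x hx y hy
  have hdet : IsUnit (fundTensor F x y).det := (Matrix.isUnit_iff_isUnit_det _).1 hpos.isUnit
  have hspray : (fun α => spray F α x y) = (fundTensor F x y)⁻¹ *ᵥ w := by
    ext α
    simp [spray, w, mulVec, dotProduct, Finset.mul_sum, mul_left_comm]
  have hEL : SolvesEulerLagrange (energy F) Q x y ↔ fundTensor F x y *ᵥ Q = w := by
    rw [funext_iff]
    refine forall_congr' fun β => ?_
    have hsum : ∑ α, Q α * pdy (pdy (energy F) β) α x y = (fundTensor F x y *ᵥ Q) β :=
      Finset.sum_congr rfl fun α _ => by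
        rw [← fundTensor_apply, ← hpos.isHermitian.apply, star_trivial, mul_comm]
    rw [semisprayDeriv_eq_sum ((hF.contDiffAt_pdy_energy hx hy β).differentiableAt (by simp)),
      hsum]
    simp only [w, mul_comm (y _)]
    constructor <;> intro h <;> linarith
  rw [hEL, hspray]
  constructor
  · intro h
    rw [← h, mulVec_mulVec, Matrix.nonsing_inv_mul _ hdet, one_mulVec]
  · rintro rfl
    rw [mulVec_mulVec, Matrix.mul_nonsing_inv _ hdet, one_mulVec]

lemma semisprayDeriv_energy_eq_zero (hF : IsFinslerMetric U F) (hx : x ∈ U) (hy : y ≠ 0) :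
    semisprayDeriv (fun α => spray F α x y) (energy F) x y = 0 := by
  have hE : ContDiffAt ℝ 2 (uncurry (energy F)) (x, y) :=
    (hF.contDiffAt_energy hx hy).of_le (by norm_cast)
  have hham : uncurry (energy F) =ᶠ[𝓝 (x, y)]
      uncurry fun x y => ∑ β, y β * pdy (energy F) β x y - energy F x y := by
    filter_upwards [(hF.isOpen.prod isOpen_ne).mem_nhds ⟨hx, hy⟩] with p hp
    simp only [uncurry, hF.sum_mul_pdy_energy hp.1 hp.2]
    ring
  rw [semisprayDeriv, hham.fderiv_eq]
  exact ((hF.solvesEulerLagrange_iff hx hy).2 rfl).semisprayDeriv_hamiltonian hE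

lemma landsbergCurv_eq (hF : IsFinslerMetric U F) (hx : x ∈ U) (hy : y ≠ 0) (β γ η : ι) :
    landsbergCurv F β γ η x y =
      -(1 / 4) * ∑ α, pdy (energy F) α x y * berwaldCurv F α β γ η x y := by
  rw [landsbergCurv, Finset.sum_comm]
  simp only [← Finset.sum_mul, hF.sum_mul_fundTensor hx hy]

end IsFinslerMetric

end FinslerMetric

section LandsbergPullback

variable {ι κ : Type*} [Fintype ι] [DecidableEq ι] [Fintype κ] [DecidableEq κ] {e : κ → ι}
  {F : (κ → ℝ) → (κ → ℝ) → ℝ} {x y : ι → ℝ}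

/-- The pullback of the Landsberg tensor of `F` along the coordinate projection `ℝ^ι → ℝ^κ` given
by `e : κ → ι`, as a tensor with indices in `ι`. -/
noncomputable def landsbergPullback (e : κ → ι) (F : (κ → ℝ) → (κ → ℝ) → ℝ) (β γ η : ι)
    (x y : ι → ℝ) : ℝ :=
  -(1 / 4) * ∑ a, pdy (energy F) a (x ∘ e) (y ∘ e) *
    pdy (pdy (pdy (pull e (spray F a)) η) γ) β x y

lemma IsFinslerMetric.landsbergPullback_apply {U : Set (κ → ℝ)} (hF : IsFinslerMetric U F)
    (he : Injective e) (hx : x ∘ e ∈ U) (hy : y ∘ e ≠ 0) (i j l : κ) :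
    landsbergPullback e F (e i) (e j) (e l) x y = landsbergCurv F i j l (x ∘ e) (y ∘ e) := by
  simp only [landsbergPullback, pdy_pdy_pdy_pull_apply he, hF.landsbergCurv_eq hx hy]
  rfl

lemma landsbergPullback_of_notMem_range (he : Injective e) {β γ η : ι}
    (h : β ∉ range e ∨ γ ∉ range e ∨ η ∉ range e) :
    landsbergPullback e F β γ η x y = 0 := by
  simp [landsbergPullback, pdy_pdy_pdy_pull_of_notMem_range he _ h]

end LandsbergPullback

section Product

variable {ι κ : Type*}

/-- The pairs of a base point in `U₁ × U₂` and a vector with nonzero components in both factors,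
where the product energy is a smooth function of the two energies. -/
def regularDomain (U₁ : Set (ι → ℝ)) (U₂ : Set (κ → ℝ)) :
    Set ((ι ⊕ κ → ℝ) × (ι ⊕ κ → ℝ)) :=
  {p | (p.1 ∘ Sum.inl ∈ U₁ ∧ p.1 ∘ Sum.inr ∈ U₂) ∧ p.2 ∘ Sum.inl ≠ 0 ∧ p.2 ∘ Sum.inr ≠ 0}

variable {U₁ : Set (ι → ℝ)} {U₂ : Set (κ → ℝ)} {x y : ι ⊕ κ → ℝ}

lemma isOpen_regularDomain (hU₁ : IsOpen U₁) (hU₂ : IsOpen U₂) :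
    IsOpen (regularDomain U₁ U₂) := by
  refine .inter (.inter (hU₁.preimage ?_) (hU₂.preimage ?_))
    (.inter (isOpen_ne.preimage ?_) (isOpen_ne.preimage ?_)) <;>
  fun_prop

lemma ne_zero_of_mem_regularDomain (hxy : (x, y) ∈ regularDomain U₁ U₂) : y ≠ 0 := by
  rintro rfl
  exact hxy.2.1 rfl

variable [Fintype ι] [DecidableEq ι] [Fintype κ] [DecidableEq κ]

/-- `F` is a Finsler metric on `U₁ × U₂` whose energy is, on vectors with nonzero components in
both factors, a `C²` function `f` of the energies of the Finsler metrics `F₁` and `F₂`. -/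
structure IsProductMetric (U₁ : Set (ι → ℝ)) (U₂ : Set (κ → ℝ)) (F₁ : (ι → ℝ) → (ι → ℝ) → ℝ)
    (F₂ : (κ → ℝ) → (κ → ℝ) → ℝ) (f : ℝ → ℝ → ℝ)
    (F : (ι ⊕ κ → ℝ) → (ι ⊕ κ → ℝ) → ℝ) : Prop where
  finsler₁ : IsFinslerMetric U₁ F₁
  finsler₂ : IsFinslerMetric U₂ F₂
  finsler : IsFinslerMetric {x : ι ⊕ κ → ℝ | x ∘ Sum.inl ∈ U₁ ∧ x ∘ Sum.inr ∈ U₂} F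
  contDiffOn : ContDiffOn ℝ 2 (uncurry f) (Ioi 0 ×ˢ Ioi 0)
  energy_eq : ∀ x y, (x, y) ∈ regularDomain U₁ U₂ →
    energy F x y = f (pull Sum.inl (energy F₁) x y) (pull Sum.inr (energy F₂) x y)

namespace IsProductMetric

variable {F₁ : (ι → ℝ) → (ι → ℝ) → ℝ} {F₂ : (κ → ℝ) → (κ → ℝ) → ℝ} {f : ℝ → ℝ → ℝ}
  {F : (ι ⊕ κ → ℝ) → (ι ⊕ κ → ℝ) → ℝ}

lemma regularDomain_mem_nhds (h : IsProductMetric U₁ U₂ F₁ F₂ f F)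
    (hxy : (x, y) ∈ regularDomain U₁ U₂) : regularDomain U₁ U₂ ∈ 𝓝 (x, y) :=
  (isOpen_regularDomain h.finsler₁.isOpen h.finsler₂.isOpen).mem_nhds hxy

lemma contDiffAt_uncurry (h : IsProductMetric U₁ U₂ F₁ F₂ f F)
    (hxy : (x, y) ∈ regularDomain U₁ U₂) :
    ContDiffAt ℝ 2 (uncurry f) (pull Sum.inl (energy F₁) x y, pull Sum.inr (energy F₂) x y) :=
  h.contDiffOn.contDiffAt <| (isOpen_Ioi.prod isOpen_Ioi).mem_nhds
    ⟨pow_pos (h.finsler₁.pos _ hxy.1.1 _ hxy.2.1) 2, pow_pos (h.finsler₂.pos _ hxy.1.2 _ hxy.2.2) 2⟩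

lemma contDiffAt_pull_inl (h : IsProductMetric U₁ U₂ F₁ F₂ f F)
    (hxy : (x, y) ∈ regularDomain U₁ U₂) :
    ContDiffAt ℝ 2 (uncurry (pull Sum.inl (energy F₁))) (x, y) :=
  contDiffAt_uncurry_pull ((h.finsler₁.contDiffAt_energy hxy.1.1 hxy.2.1).of_le (by norm_cast))

lemma contDiffAt_pull_inr (h : IsProductMetric U₁ U₂ F₁ F₂ f F)
    (hxy : (x, y) ∈ regularDomain U₁ U₂) :
    ContDiffAt ℝ 2 (uncurry (pull Sum.inr (energy F₂))) (x, y) :=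
  contDiffAt_uncurry_pull ((h.finsler₂.contDiffAt_energy hxy.1.2 hxy.2.2).of_le (by norm_cast))

lemma uncurry_energy_eventuallyEq (h : IsProductMetric U₁ U₂ F₁ F₂ f F)
    (hxy : (x, y) ∈ regularDomain U₁ U₂) :
    uncurry (energy F) =ᶠ[𝓝 (x, y)] fun p => uncurry f
      (uncurry (pull Sum.inl (energy F₁)) p, uncurry (pull Sum.inr (energy F₂)) p) := by
  filter_upwards [h.regularDomain_mem_nhds hxy] with p hp using h.energy_eq p.1 p.2 hp

theorem spray_eq (h : IsProductMetric U₁ U₂ F₁ F₂ f F) (hxy : (x, y) ∈ regularDomain U₁ U₂) :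
    (fun α => spray F α x y) =
      Sum.elim (fun a => pull Sum.inl (spray F₁ a) x y) fun b => pull Sum.inr (spray F₂ b) x y := by
  have hEL₁ := (h.finsler₁.solvesEulerLagrange_iff hxy.1.1 hxy.2.1).2 rfl
  have hEL₂ := (h.finsler₂.solvesEulerLagrange_iff hxy.1.2 hxy.2.2).2 rfl
  refine ((h.finsler.solvesEulerLagrange_iff hxy.1 (ne_zero_of_mem_regularDomain hxy)).1 ?_).symm
  refine (hEL₁.pull Sum.inl_injective).comp_prodMk (hEL₂.pull Sum.inr_injective) ?_ ?_
    (h.contDiffAt_uncurry hxy) (h.contDiffAt_pull_inl hxy) (h.contDiffAt_pull_inr hxy)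
    (h.uncurry_energy_eventuallyEq hxy)
  · rw [semisprayDeriv_pull Sum.inl_injective]
    exact h.finsler₁.semisprayDeriv_energy_eq_zero hxy.1.1 hxy.2.1
  · rw [semisprayDeriv_pull Sum.inr_injective]
    exact h.finsler₂.semisprayDeriv_energy_eq_zero hxy.1.2 hxy.2.2

lemma pdy_energy (h : IsProductMetric U₁ U₂ F₁ F₂ f F) (hxy : (x, y) ∈ regularDomain U₁ U₂)
    (α : ι ⊕ κ) :
    pdy (energy F) α x y =
      pderivS f (pull Sum.inl (energy F₁) x y) (pull Sum.inr (energy F₂) x y) *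
          pdy (pull Sum.inl (energy F₁)) α x y +
        pderivT f (pull Sum.inl (energy F₁) x y) (pull Sum.inr (energy F₂) x y) *
          pdy (pull Sum.inr (energy F₂)) α x y := by
  have hf := (h.contDiffAt_uncurry hxy).differentiableAt (by simp)
  rw [pderivS_eq_fderiv hf, pderivT_eq_fderiv hf]
  exact pdy_comp_prodMk hf ((h.contDiffAt_pull_inl hxy).differentiableAt (by simp))
    ((h.contDiffAt_pull_inr hxy).differentiableAt (by simp)) (h.uncurry_energy_eventuallyEq hxy) α

lemma pdy_energy_inl (h : IsProductMetric U₁ U₂ F₁ F₂ f F)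
    (hxy : (x, y) ∈ regularDomain U₁ U₂) (a : ι) :
    pdy (energy F) (Sum.inl a) x y =
      pderivS f (pull Sum.inl (energy F₁) x y) (pull Sum.inr (energy F₂) x y) *
        pdy (energy F₁) a (x ∘ Sum.inl) (y ∘ Sum.inl) := by
  rw [h.pdy_energy hxy, pdy_pull_apply Sum.inl_injective,
    pdy_pull_of_notMem_range Sum.inr_injective _ (by simp), mul_zero, add_zero]
  rfl

lemma pdy_energy_inr (h : IsProductMetric U₁ U₂ F₁ F₂ f F)
    (hxy : (x, y) ∈ regularDomain U₁ U₂) (b : κ) :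
    pdy (energy F) (Sum.inr b) x y =
      pderivT f (pull Sum.inl (energy F₁) x y) (pull Sum.inr (energy F₂) x y) *
        pdy (energy F₂) b (x ∘ Sum.inr) (y ∘ Sum.inr) := by
  rw [h.pdy_energy hxy, pdy_pull_apply Sum.inr_injective,
    pdy_pull_of_notMem_range Sum.inl_injective _ (by simp), mul_zero, zero_add]
  rfl

lemma eventually_spray_eq (h : IsProductMetric U₁ U₂ F₁ F₂ f F)
    (hxy : (x, y) ∈ regularDomain U₁ U₂) :
    ∀ᶠ y' in 𝓝 y, (fun α => spray F α x y') =
      Sum.elim (fun a => pull Sum.inl (spray F₁ a) x y')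
        fun b => pull Sum.inr (spray F₂ b) x y' := by
  filter_upwards [(Continuous.prodMk_right x).continuousAt.preimage_mem_nhds
    (h.regularDomain_mem_nhds hxy)] with y' hy' using h.spray_eq hy'

lemma berwaldCurv_inl (h : IsProductMetric U₁ U₂ F₁ F₂ f F)
    (hxy : (x, y) ∈ regularDomain U₁ U₂) (a : ι) (β γ η : ι ⊕ κ) :
    berwaldCurv F (Sum.inl a) β γ η x y =
      pdy (pdy (pdy (pull Sum.inl (spray F₁ a)) η) γ) β x y := by
  have hspray : spray F (Sum.inl a) x =ᶠ[𝓝 y] pull Sum.inl (spray F₁ a) x :=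
    (h.eventually_spray_eq hxy).mono fun _ hy' => congrFun hy' (Sum.inl a)
  exact (pdy_eventuallyEq (pdy_eventuallyEq (pdy_eventuallyEq hspray η) γ) β).eq_of_nhds

lemma berwaldCurv_inr (h : IsProductMetric U₁ U₂ F₁ F₂ f F)
    (hxy : (x, y) ∈ regularDomain U₁ U₂) (b : κ) (β γ η : ι ⊕ κ) :
    berwaldCurv F (Sum.inr b) β γ η x y =
      pdy (pdy (pdy (pull Sum.inr (spray F₂ b)) η) γ) β x y := by
  have hspray : spray F (Sum.inr b) x =ᶠ[𝓝 y] pull Sum.inr (spray F₂ b) x :=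
    (h.eventually_spray_eq hxy).mono fun _ hy' => congrFun hy' (Sum.inr b)
  exact (pdy_eventuallyEq (pdy_eventuallyEq (pdy_eventuallyEq hspray η) γ) β).eq_of_nhds

theorem landsbergCurv_eq (h : IsProductMetric U₁ U₂ F₁ F₂ f F)
    (hxy : (x, y) ∈ regularDomain U₁ U₂) (β γ η : ι ⊕ κ) :
    landsbergCurv F β γ η x y =
      pderivS f (pull Sum.inl (energy F₁) x y) (pull Sum.inr (energy F₂) x y) *
          landsbergPullback Sum.inl F₁ β γ η x y +
        pderivT f (pull Sum.inl (energy F₁) x y) (pull Sum.inr (energy F₂) x y) *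
          landsbergPullback Sum.inr F₂ β γ η x y := by
  rw [h.finsler.landsbergCurv_eq hxy.1 (ne_zero_of_mem_regularDomain hxy), Fintype.sum_sum_type]
  simp only [h.pdy_energy_inl hxy, h.pdy_energy_inr hxy, h.berwaldCurv_inl hxy,
    h.berwaldCurv_inr hxy, landsbergPullback, mul_assoc, ← Finset.mul_sum]
  ring

end IsProductMetric

lemma IsMinkowskianProduct.isProductMetric {m n : ℕ} {U₁ : Set (Fin m → ℝ)}
    {U₂ : Set (Fin n → ℝ)} {F₁ : (Fin m → ℝ) → (Fin m → ℝ) → ℝ}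
    {F₂ : (Fin n → ℝ) → (Fin n → ℝ) → ℝ} {f : ℝ → ℝ → ℝ}
    {F : (Fin m ⊕ Fin n → ℝ) → (Fin m ⊕ Fin n → ℝ) → ℝ}
    (h : IsMinkowskianProduct U₁ U₂ F₁ F₂ f F) : IsProductMetric U₁ U₂ F₁ F₂ f F where
  finsler₁ := h.finsler₁
  finsler₂ := h.finsler₂
  finsler := h.finsler
  contDiffOn := h.f_smooth.of_le (by norm_cast)
  energy_eq x y _ := by
    have hf := h.f_nonneg _ (mem_Ici.2 (sq_nonneg (F₁ (x ∘ Sum.inl) (y ∘ Sum.inl)))) _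
      (mem_Ici.2 (sq_nonneg (F₂ (x ∘ Sum.inr) (y ∘ Sum.inr))))
    rw [energy, h.F_def, Real.sq_sqrt hf]
    rfl

theorem landsbergCurv_of_minkowskian_product_general {U₁ : Set (ι → ℝ)} {U₂ : Set (κ → ℝ)}
    {F₁ : (ι → ℝ) → (ι → ℝ) → ℝ} {F₂ : (κ → ℝ) → (κ → ℝ) → ℝ} {f : ℝ → ℝ → ℝ}
    {F : (ι ⊕ κ → ℝ) → (ι ⊕ κ → ℝ) → ℝ} (h : IsProductMetric U₁ U₂ F₁ F₂ f F)
    {x y : ι ⊕ κ → ℝ} (hxy : (x, y) ∈ regularDomain U₁ U₂) :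
    (∀ i j l : ι,
      landsbergCurv F (Sum.inl i) (Sum.inl j) (Sum.inl l) x y =
        pderivS f (F₁ (x ∘ Sum.inl) (y ∘ Sum.inl) ^ 2) (F₂ (x ∘ Sum.inr) (y ∘ Sum.inr) ^ 2) *
          landsbergCurv F₁ i j l (x ∘ Sum.inl) (y ∘ Sum.inl)) ∧
    (∀ i' j' l' : κ,
      landsbergCurv F (Sum.inr i') (Sum.inr j') (Sum.inr l') x y =
        pderivT f (F₁ (x ∘ Sum.inl) (y ∘ Sum.inl) ^ 2) (F₂ (x ∘ Sum.inr) (y ∘ Sum.inr) ^ 2) *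
          landsbergCurv F₂ i' j' l' (x ∘ Sum.inr) (y ∘ Sum.inr)) ∧
    (∀ β γ η : ι ⊕ κ,
      ((∃ i, β = Sum.inl i) ∨ (∃ i, γ = Sum.inl i) ∨ (∃ i, η = Sum.inl i)) →
      ((∃ i', β = Sum.inr i') ∨ (∃ i', γ = Sum.inr i') ∨ (∃ i', η = Sum.inr i')) →
      landsbergCurv F β γ η x y = 0) := by
  refine ⟨fun i j l => ?_, fun i' j' l' => ?_, fun β γ η hl hr => ?_⟩
  · rw [h.landsbergCurv_eq hxy, landsbergPullback_of_notMem_range Sum.inr_injective (by simp),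
      h.finsler₁.landsbergPullback_apply Sum.inl_injective hxy.1.1 hxy.2.1, mul_zero, add_zero]
    rfl
  · rw [h.landsbergCurv_eq hxy, landsbergPullback_of_notMem_range Sum.inl_injective (by simp),
      h.finsler₂.landsbergPullback_apply Sum.inr_injective hxy.1.2 hxy.2.2, mul_zero, zero_add]
    rfl
  · have hl' : β ∉ range Sum.inr ∨ γ ∉ range Sum.inr ∨ η ∉ range Sum.inr := by
      rcases hl with ⟨i, rfl⟩ | ⟨i, rfl⟩ | ⟨i, rfl⟩ <;> simp
    have hr' : β ∉ range Sum.inl ∨ γ ∉ range Sum.inl ∨ η ∉ range Sum.inl := by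
      rcases hr with ⟨i, rfl⟩ | ⟨i, rfl⟩ | ⟨i, rfl⟩ <;> simp
    rw [h.landsbergCurv_eq hxy, landsbergPullback_of_notMem_range Sum.inl_injective hr',
      landsbergPullback_of_notMem_range Sum.inr_injective hl', mul_zero, mul_zero, add_zero]

end Product

/-- The Landsberg curvature of a Minkowskian product Finsler metric satisfies
`L_{ijl} = f_K·L¹_{ijl}`, `L_{i'j'l'} = f_H·L²_{i'j'l'}`, and every component
with mixed block indices vanishes. -/
theorem landsbergCurv_of_minkowskian_product {m n : ℕ}
    (U₁ : Set (Fin m → ℝ)) (U₂ : Set (Fin n → ℝ))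
    (F₁ : (Fin m → ℝ) → (Fin m → ℝ) → ℝ) (F₂ : (Fin n → ℝ) → (Fin n → ℝ) → ℝ)
    (f : ℝ → ℝ → ℝ) (F : (Fin m ⊕ Fin n → ℝ) → (Fin m ⊕ Fin n → ℝ) → ℝ)
    (hprod : IsMinkowskianProduct U₁ U₂ F₁ F₂ f F) :
    ∀ x : Fin m ⊕ Fin n → ℝ, (x ∘ Sum.inl) ∈ U₁ → (x ∘ Sum.inr) ∈ U₂ →
    ∀ y : Fin m ⊕ Fin n → ℝ, (y ∘ Sum.inl) ≠ 0 → (y ∘ Sum.inr) ≠ 0 →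
      (∀ i j l : Fin m,
        landsbergCurv F (Sum.inl i) (Sum.inl j) (Sum.inl l) x y =
          pderivS f ((F₁ (x ∘ Sum.inl) (y ∘ Sum.inl)) ^ 2)
              ((F₂ (x ∘ Sum.inr) (y ∘ Sum.inr)) ^ 2) *
            landsbergCurv F₁ i j l (x ∘ Sum.inl) (y ∘ Sum.inl)) ∧
      (∀ i' j' l' : Fin n,
        landsbergCurv F (Sum.inr i') (Sum.inr j') (Sum.inr l') x y =
          pderivT f ((F₁ (x ∘ Sum.inl) (y ∘ Sum.inl)) ^ 2)
              ((F₂ (x ∘ Sum.inr) (y ∘ Sum.inr)) ^ 2) *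
            landsbergCurv F₂ i' j' l' (x ∘ Sum.inr) (y ∘ Sum.inr)) ∧
      (∀ β γ η : Fin m ⊕ Fin n,
        ((∃ i : Fin m, β = Sum.inl i) ∨ (∃ i : Fin m, γ = Sum.inl i) ∨
          (∃ i : Fin m, η = Sum.inl i)) →
        ((∃ i' : Fin n, β = Sum.inr i') ∨ (∃ i' : Fin n, γ = Sum.inr i') ∨
          (∃ i' : Fin n, η = Sum.inr i')) →
        landsbergCurv F β γ η x y = 0) := fun _ hx₁ hx₂ _ hy₁ hy₂ =>
  landsbergCurv_of_minkowskian_product_general hprod.isProductMetric ⟨⟨hx₁, hx₂⟩, hy₁, hy₂⟩
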